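/- arXiv:1012.4257 — 2 statements merged into one kernel-verified Lean document; each statement's English description precedes it below -/
import Mathlib

section
/- Let n ≥ 2. The quotient ring ℤ[a₁,a₂]/(δ_{2n}, δ'_{2n+1}) is a free ℤ-module of rank 2n². -/
/-- The sequence `a₀ = 1, a₁, a₂` (and `0` otherwise) of coefficients in `ℤ[a₁,a₂]`. -/
noncomputable def aseq2 (k : ℤ) : MvPolynomial (Fin 2) ℤ :=
  if k = 0 then 1
  else if k = 1 then MvPolynomial.X 0
  else if k = 2 then MvPolynomial.X 1
  else 0

/-- `δ_r := det((a_{1+j−i})_{1≤i,j≤r})`, with `δ₀ = 1`. -/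
noncomputable def delta (r : ℕ) : MvPolynomial (Fin 2) ℤ :=
  Matrix.det (Matrix.of fun i j : Fin r => aseq2 (1 + ((j : ℕ) : ℤ) - ((i : ℕ) : ℤ)))

/-!
The recurrence `δ_{r+2} = a₁ δ_{r+1} - a₂ δ_r` turns the pair `(δ_{2n}, δ'_{2n+1})` into
`(δ_{2n+2}, δ'_{2n+3})` in two steps, each of which multiplies one generator by `a₂` up to a
multiple of the other generator:
`(δ'_{2n+1}, δ_{2n+2}) = (δ'_{2n+1}, a₂ δ_{2n})` and
`(δ_{2n+2}, δ'_{2n+3}) = (δ_{2n+2}, a₂ δ'_{2n+1})`.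
In `A = ℤ[a₁,a₂]`, if `a₂` is a nonzerodivisor modulo `f`, there is a short exact sequence
`0 → A ⧸ (f, g) → A ⧸ (f, a₂ g) → A ⧸ (f, a₂) → 0`. Modulo `a₂` the polynomials `δ_{2n}` and
`δ'_{2n+1}` both become `a₁ ^ (2n)`, so the two steps raise the rank by
`2n + (2n + 2) = 2(n + 1)² - 2n²`.
-/

/-- `M` is a free `R`-module of rank `m`, in the form of a basis with `m` elements, so that the
notion includes finiteness and makes sense over any ring `R`. -/
def IsFreeOfRank (R M : Type*) [Semiring R] [AddCommMonoid M] [Module R M] (m : ℕ) : Prop :=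
  Nonempty (Module.Basis (Fin m) R M)

namespace IsFreeOfRank

section Semiring

variable {R M N : Type*} [Semiring R] [AddCommMonoid M] [Module R M] [AddCommMonoid N] [Module R N]
  {m : ℕ}

theorem free (h : IsFreeOfRank R M m) : Module.Free R M :=
  let ⟨b⟩ := h
  .of_basis b

theorem finrank_eq [StrongRankCondition R] (h : IsFreeOfRank R M m) : Module.finrank R M = m := by
  obtain ⟨b⟩ := h
  rw [Module.finrank_eq_card_basis b, Fintype.card_fin]

theorem of_equiv (h : IsFreeOfRank R M m) (e : M ≃ₗ[R] N) : IsFreeOfRank R N m :=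
  h.map (·.map e)

theorem zero_of_subsingleton [Subsingleton M] : IsFreeOfRank R M 0 :=
  ⟨.empty M⟩

end Semiring

theorem of_exact {R M N P : Type*} [Ring R] [AddCommGroup M] [Module R M] [AddCommGroup N]
    [Module R N] [AddCommGroup P] [Module R P] {m k : ℕ} {f : M →ₗ[R] N} {g : N →ₗ[R] P}
    (hM : IsFreeOfRank R M m) (hP : IsFreeOfRank R P k) (hfg : Function.Exact f g)
    (hf : Function.Injective f) (hg : Function.Surjective g) : IsFreeOfRank R N (m + k) := by
  have := hP.free
  obtain ⟨l, hl⟩ := Module.projective_lifting_property g LinearMap.id hg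
  obtain ⟨bM⟩ := hM
  obtain ⟨bP⟩ := hP
  exact ⟨((bM.prod bP).map (hfg.splitSurjectiveEquiv hf ⟨l, hl⟩).1.symm).reindex finSumFinEquiv⟩

end IsFreeOfRank

section Quotient

open Ideal
open scoped Pointwise

variable {R A B : Type*} [CommRing R] [CommRing A] [Algebra R A] [CommRing B]

theorem isFreeOfRank_quotient_span_mul {s t : A} {m k : ℕ} (hs : s ∈ nonZeroDivisors A)
    (ht : IsFreeOfRank R (A ⧸ span {t}) m) (hsk : IsFreeOfRank R (A ⧸ span {s}) k) :
    IsFreeOfRank R (A ⧸ span {s * t}) (m + k) := by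
  have hsmul : s • span {t} = span {s * t} := by
    rw [← submodule_span_eq, Submodule.smul_span, Set.smul_set_singleton, smul_eq_mul,
      submodule_span_eq]
  rw [← hsmul]
  exact ht.of_exact hsk (f := (mulQuot s (span {t})).restrictScalars R)
    (g := (quotOfMul s (span {t})).restrictScalars R) (exact_mulQuot_quotOfMul _)
    (mulQuot_injective _ hs) (quotOfMul_surjective _)

variable (R) in
/-- The isomorphism `(A ⧸ (f)) ⧸ (g) ≃ A ⧸ (f, g)`, used to pass between pairs of generators and
principal ideals. -/
noncomputable def quotientSpanSingletonEquivQuotientSpanPair (f g : A) :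
    ((A ⧸ span {f}) ⧸ span {Ideal.Quotient.mk (span {f}) g}) ≃ₐ[R] A ⧸ span {f, g} :=
  (quotientEquivAlgOfEq R (by simp [map_span])).trans <|
    (DoubleQuot.quotQuotEquivQuotSupₐ R (span {f}) (span {g})).trans <|
      quotientEquivAlgOfEq R (span_insert f {g}).symm

theorem isFreeOfRank_quotient_span_pair_mul {f g y : A} {m k : ℕ}
    (hy : Ideal.Quotient.mk (span {f}) y ∈ nonZeroDivisors (A ⧸ span {f}))
    (hg : IsFreeOfRank R (A ⧸ span {f, g}) m) (hyk : IsFreeOfRank R (A ⧸ span {f, y}) k) :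
    IsFreeOfRank R (A ⧸ span {f, y * g}) (m + k) := by
  let e (t : A) := (quotientSpanSingletonEquivQuotientSpanPair R f t).toLinearEquiv
  refine .of_equiv ?_ (e (y * g))
  rw [map_mul]
  exact isFreeOfRank_quotient_span_mul hy (hg.of_equiv (e g).symm) (hyk.of_equiv (e y).symm)

theorem mk_mem_nonZeroDivisors_of_ker_eq_span {φ : A →+* B} {f y : A}
    (hker : RingHom.ker φ = span {y}) (hy : y ∈ nonZeroDivisors A)
    (hf : φ f ∈ nonZeroDivisors B) :
    Ideal.Quotient.mk (span {f}) y ∈ nonZeroDivisors (A ⧸ span {f}) := by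
  rw [mem_nonZeroDivisors_iff_left]
  intro z hz
  obtain ⟨u, rfl⟩ := Ideal.Quotient.mk_surjective z
  rw [← map_mul, Quotient.eq_zero_iff_dvd] at hz
  obtain ⟨c, hc⟩ := hz
  have hφy : φ y = 0 := by
    rw [← RingHom.mem_ker, hker]
    exact mem_span_singleton_self y
  have hφc : φ c = 0 := by
    refine (mul_left_mem_nonZeroDivisors_eq_zero_iff hf).mp ?_
    rw [← map_mul, ← hc, map_mul, hφy, zero_mul]
  obtain ⟨d, rfl⟩ : y ∣ c := by rwa [← mem_span_singleton, ← hker, RingHom.mem_ker]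
  rw [Quotient.eq_zero_iff_dvd]
  refine ⟨d, (mul_cancel_left_mem_nonZeroDivisors hy).mp ?_⟩
  rw [hc, mul_left_comm]

theorem isFreeOfRank_quotient_span_pair_of_monic {φ : A →ₐ[R] Polynomial R} {f y : A}
    (hφ : Function.Surjective φ) (hker : RingHom.ker φ = span {y}) (hf : (φ f).Monic) :
    IsFreeOfRank R (A ⧸ span {f, y}) (φ f).natDegree := by
  let ψ : A →ₐ[R] AdjoinRoot (φ f) := (AdjoinRoot.mkₐ (φ f)).comp φ
  have hψ : Function.Surjective ψ := AdjoinRoot.mk_surjective.comp hφ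
  have hψker : RingHom.ker ψ = span {f, y} := by
    ext a
    rw [span_insert, ← hker]
    change AdjoinRoot.mk (φ f) (φ a) = 0 ↔ _
    rw [AdjoinRoot.mk_eq_zero, ← mem_span_singleton, ← Set.image_singleton (f := φ), ← map_span,
      ← mem_comap, comap_map_of_surjective φ hφ]
    rfl
  rw [← hψker]
  exact .of_equiv ⟨AdjoinRoot.powerBasisAux' hf⟩
    (quotientKerAlgEquivOfSurjective hψ).symm.toLinearEquiv

theorem isFreeOfRank_quotient_span_pair_mul_of_monic {φ : A →ₐ[R] Polynomial R} {f g y : A} {m : ℕ}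
    (hφ : Function.Surjective φ) (hker : RingHom.ker φ = span {y}) (hy : y ∈ nonZeroDivisors A)
    (hf : (φ f).Monic) (hg : IsFreeOfRank R (A ⧸ span {f, g}) m) :
    IsFreeOfRank R (A ⧸ span {f, y * g}) (m + (φ f).natDegree) :=
  isFreeOfRank_quotient_span_pair_mul
    (mk_mem_nonZeroDivisors_of_ker_eq_span (φ := (φ : A →+* Polynomial R)) hker hy
      hf.mem_nonZeroDivisors)
    hg (isFreeOfRank_quotient_span_pair_of_monic hφ hker hf)

end Quotient

open MvPolynomial

section EvalSecondZero

variable (R : Type*) [CommRing R]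

/-- The reduction modulo the second variable, `R[a₁,a₂] → R[a₁]`, `a₂ ↦ 0`. -/
noncomputable def evalSecondZero : MvPolynomial (Fin 2) R →ₐ[R] Polynomial R :=
  aeval ![Polynomial.X, 0]

@[simp]
theorem evalSecondZero_X_zero : evalSecondZero R (X 0) = Polynomial.X := by
  simp [evalSecondZero]

@[simp]
theorem evalSecondZero_X_one : evalSecondZero R (X 1) = 0 := by
  simp [evalSecondZero]

theorem evalSecondZero_aeval_X_zero (p : Polynomial R) :
    evalSecondZero R (Polynomial.aeval (X 0) p) = p := by
  rw [← Polynomial.aeval_algHom_apply, evalSecondZero_X_zero, Polynomial.aeval_X_left_apply]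

theorem evalSecondZero_surjective : Function.Surjective (evalSecondZero R) :=
  fun p => ⟨_, evalSecondZero_aeval_X_zero R p⟩

theorem ker_evalSecondZero : RingHom.ker (evalSecondZero R) = Ideal.span {X 1} := by
  let q := Ideal.Quotient.mkₐ R (Ideal.span {(X 1 : MvPolynomial (Fin 2) R)})
  have hq : q = (q.comp (Polynomial.aeval (X 0))).comp (evalSecondZero R) := by
    apply algHom_ext
    intro i
    fin_cases i <;> simp [q]
  apply le_antisymm
  · intro f hf
    have hqf := DFunLike.congr_fun hq f
    rw [AlgHom.comp_apply, RingHom.mem_ker.mp hf, map_zero] at hqf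
    exact Ideal.Quotient.eq_zero_iff_mem.mp hqf
  · rw [Ideal.span_singleton_le_iff_mem, RingHom.mem_ker, evalSecondZero_X_one]

variable {R} in
theorem IsFreeOfRank.quotient_X_one_mul [Nontrivial R] {f g : MvPolynomial (Fin 2) R} {k m : ℕ}
    (hf : evalSecondZero R f = Polynomial.X ^ k)
    (hg : IsFreeOfRank R (MvPolynomial (Fin 2) R ⧸ Ideal.span {f, g}) m) :
    IsFreeOfRank R (MvPolynomial (Fin 2) R ⧸ Ideal.span {f, X 1 * g}) (m + k) := by
  have hmonic : (evalSecondZero R f).Monic := hf ▸ Polynomial.monic_X_pow k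
  have hdegree : (evalSecondZero R f).natDegree = k := by rw [hf, Polynomial.natDegree_X_pow]
  rw [← hdegree]
  exact isFreeOfRank_quotient_span_pair_mul_of_monic (evalSecondZero_surjective R)
    (ker_evalSecondZero R) isRegular_X.mem_nonZeroDivisors hmonic hg

end EvalSecondZero

theorem det_eq_of_tridiagonal_corner {R : Type*} [CommRing R] {r : ℕ}
    (M : Matrix (Fin (r + 2)) (Fin (r + 2)) R)
    (hrow : ∀ j : Fin r, M 0 j.succ.succ = 0) (hcol : ∀ i : Fin r, M i.succ.succ 0 = 0) :
    M.det = M 0 0 * (M.submatrix Fin.succ Fin.succ).det -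
      M 0 1 * M 1 0 * (M.submatrix (Fin.succ ∘ Fin.succ) (Fin.succ ∘ Fin.succ)).det := by
  have hminor : (M.submatrix Fin.succ (Fin.succAbove 1)).det =
      M 1 0 * (M.submatrix (Fin.succ ∘ Fin.succ) (Fin.succ ∘ Fin.succ)).det := by
    rw [Matrix.det_succ_column_zero, Fin.sum_univ_succ, Finset.sum_eq_zero]
    · simp [Matrix.submatrix_submatrix, Function.comp_def]
    · intro i _
      simp [hcol]
  rw [Matrix.det_succ_row_zero, Fin.sum_univ_succ, Fin.sum_univ_succ, Finset.sum_eq_zero]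
  · simp [hminor, mul_assoc, sub_eq_add_neg]
  · intro j _
    simp [hrow]

theorem aseq2_zero : aseq2 0 = 1 :=
  if_pos rfl

theorem aseq2_one : aseq2 1 = X 0 := by
  simp [aseq2]

theorem aseq2_two : aseq2 2 = X 1 := by
  simp [aseq2]

theorem aseq2_eq_zero {k : ℤ} (hk : k < 0 ∨ 2 < k) : aseq2 k = 0 := by
  grind [aseq2]

theorem delta_add_two (r : ℕ) : delta (r + 2) = X 0 * delta (r + 1) - X 1 * delta r := by
  have hshift (i j : ℤ) : 1 + (j + 1) - (i + 1) = 1 + j - i := by ring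
  rw [delta, det_eq_of_tridiagonal_corner]
  · simp [delta, aseq2_zero, aseq2_one, aseq2_two, Matrix.submatrix, hshift]
  · intro j
    rw [Matrix.of_apply, aseq2_eq_zero]
    simp only [Fin.val_succ, Fin.val_zero]
    omega
  · intro i
    rw [Matrix.of_apply, aseq2_eq_zero]
    simp only [Fin.val_succ, Fin.val_zero]
    omega

theorem delta_zero : delta 0 = 1 :=
  Matrix.det_fin_zero

theorem delta_one : delta 1 = X 0 := by
  simp [delta, aseq2_one]

/-- The quotient `δ'_{2n+1} = δ_{2n+1} / a₁`, encoded through the recurrence it inherits from `δ`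
because division is not available in `ℤ[a₁,a₂]`. -/
noncomputable def deltaOddQuotient : ℕ → MvPolynomial (Fin 2) ℤ
  | 0 => 1
  | n + 1 => delta (2 * n + 2) - X 1 * deltaOddQuotient n

theorem delta_odd (n : ℕ) : delta (2 * n + 1) = X 0 * deltaOddQuotient n := by
  induction n with
  | zero => simp [delta_one, deltaOddQuotient]
  | succ n ih =>
    rw [show 2 * (n + 1) + 1 = 2 * n + 1 + 2 by ring, delta_add_two, ih, deltaOddQuotient]
    ring

theorem evalSecondZero_delta (r : ℕ) : evalSecondZero ℤ (delta r) = Polynomial.X ^ r := by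
  induction r using Nat.twoStepInduction with
  | zero => simp [delta_zero]
  | one => simp [delta_one]
  | more r _ ih =>
    simp only [delta_add_two, map_sub, map_mul, evalSecondZero_X_zero, evalSecondZero_X_one, ih]
    ring

theorem evalSecondZero_deltaOddQuotient (n : ℕ) :
    evalSecondZero ℤ (deltaOddQuotient n) = Polynomial.X ^ (2 * n) := by
  apply mul_left_cancel₀ (Polynomial.X_ne_zero (R := ℤ))
  rw [← pow_succ', ← evalSecondZero_delta, delta_odd, map_mul, evalSecondZero_X_zero]

theorem span_deltaOddQuotient_delta_add_two (n : ℕ) :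
    Ideal.span {deltaOddQuotient n, delta (2 * n + 2)} =
      Ideal.span {deltaOddQuotient n, X 1 * delta (2 * n)} := by
  rw [delta_add_two, delta_odd, ← mul_assoc, ← neg_sub, Ideal.span_pair_neg,
    Ideal.span_pair_sub_mul_left]

theorem span_delta_add_two_deltaOddQuotient_succ (n : ℕ) :
    Ideal.span {delta (2 * n + 2), deltaOddQuotient (n + 1)} =
      Ideal.span {delta (2 * n + 2), X 1 * deltaOddQuotient n} := by
  rw [deltaOddQuotient, ← neg_sub, Ideal.span_pair_neg, Ideal.span_pair_sub_left]

theorem isFreeOfRank_quotient_delta (n : ℕ) :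
    IsFreeOfRank ℤ (MvPolynomial (Fin 2) ℤ ⧸ Ideal.span {delta (2 * n), deltaOddQuotient n})
      (2 * n ^ 2) := by
  induction n with
  | zero =>
    have : Subsingleton
        (MvPolynomial (Fin 2) ℤ ⧸ Ideal.span {delta (2 * 0), deltaOddQuotient 0}) := by
      rw [Ideal.Quotient.subsingleton_iff, mul_zero, delta_zero, Ideal.eq_top_iff_one]
      exact Ideal.subset_span (Set.mem_insert _ _)
    exact .zero_of_subsingleton
  | succ n ih =>
    rw [Ideal.span_pair_comm] at ih
    have hmid := ih.quotient_X_one_mul (evalSecondZero_deltaOddQuotient n)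
    rw [← span_deltaOddQuotient_delta_add_two, Ideal.span_pair_comm] at hmid
    have hnext := hmid.quotient_X_one_mul (evalSecondZero_delta (2 * n + 2))
    rw [← span_delta_add_two_deltaOddQuotient_succ] at hnext
    have hsq : 2 * (n + 1) ^ 2 = 2 * n ^ 2 + 2 * n + (2 * n + 2) := by ring
    rw [hsq]
    exact hnext

/-- For `n ≥ 2`, the quotient `ℤ[a₁,a₂]/(δ_{2n}, δ'_{2n+1})`, where `δ'_{2n+1} = δ_{2n+1}/a₁`,
is a free `ℤ`-module of rank `2n²`. -/
theorem stmt_18 (n : ℕ) (hn : 2 ≤ n) (δ' : MvPolynomial (Fin 2) ℤ)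
    (hδ' : MvPolynomial.X 0 * δ' = delta (2 * n + 1)) :
    Module.Free ℤ (MvPolynomial (Fin 2) ℤ ⧸ Ideal.span {delta (2 * n), δ'}) ∧
    Module.finrank ℤ (MvPolynomial (Fin 2) ℤ ⧸ Ideal.span {delta (2 * n), δ'})
      = 2 * n ^ 2 := by
  rw [delta_odd] at hδ'
  obtain rfl := mul_left_cancel₀ (MvPolynomial.X_ne_zero (R := ℤ) (0 : Fin 2)) hδ'
  have hrank := isFreeOfRank_quotient_delta n
  exact ⟨hrank.free, hrank.finrank_eq⟩
end

section
/- Let n ≥ 2, let V be a (2n+1)-dimensional ℂ-vector space, and let ω be an alternating bilinear form on V of rank 2n. Let F_• = (F₀ ⊂ F₁ ⊂ ⋯ ⊂ F_{2n+1} = V) and G_• be complete flags of V (dim F_p = p, dim G_q = q), and let 0 ≤ i ≤ 2n−2 be an integer. Denote by U^⊥ the ω-orthogonal of a subspace U. Assume: (i) dim(F_p ∩ G_q) = max(0, p + q − (2n+1)) for all 0 ≤ p, q ≤ 2n+1; (ii) dim(F_{2n+1−i} ∩ G_{i+3} ∩ F₁^⊥ ∩ G₁^⊥) = 1; (iii)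 F₁ ⊄ G₁^⊥; (iv) G₁ ⊄ F₁^⊥. Then there exists exactly one pair of subspaces (U₁, U₃) of V with dim U₁ = 1, dim U₃ = 3 and U₁ ⊆ U₃ ⊆ U₁^⊥, such that there exist 2-dimensional subspaces Σ and Σ' with U₁ ⊆ Σ ⊆ U₃, F₁ ⊆ Σ ⊆ F_{2n+1−i}, and U₁ ⊆ Σ' ⊆ U₃, G₁ ⊆ Σ' ⊆ G_{i+3}. Moreover this pair is given by U₁ = F_{2n+1−i} ∩ G_{i+3} ∩ F₁^⊥ ∩ G₁^⊥ and U₃ = U₁ ⊕ F₁ ⊕ G₁. -/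
open Module

/-- The predicate on a pair `(U₁, U₃)` of subspaces of `V`: `dim U₁ = 1`, `dim U₃ = 3`,
`U₁ ⊆ U₃ ⊆ U₁^⊥`, and there exist `2`-dimensional subspaces `Σ, Σ'` with
`U₁ ⊆ Σ ⊆ U₃`, `F₁ ⊆ Σ ⊆ F_{2n+1−i}` and `U₁ ⊆ Σ' ⊆ U₃`, `G₁ ⊆ Σ' ⊆ G_{i+3}`. -/
def linePred (n i : ℕ) {V : Type*} [AddCommGroup V] [Module ℂ V]
    (ω : V →ₗ[ℂ] V →ₗ[ℂ] ℂ) (F G : ℕ → Submodule ℂ V)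
    (U : Submodule ℂ V × Submodule ℂ V) : Prop :=
  finrank ℂ U.1 = 1 ∧ finrank ℂ U.2 = 3 ∧ U.1 ≤ U.2 ∧
    U.2 ≤ LinearMap.BilinForm.orthogonal ω U.1 ∧
    (∃ S : Submodule ℂ V, finrank ℂ S = 2 ∧ U.1 ≤ S ∧ S ≤ U.2 ∧
      F 1 ≤ S ∧ S ≤ F (2 * n + 1 - i)) ∧
    (∃ S : Submodule ℂ V, finrank ℂ S = 2 ∧ U.1 ≤ S ∧ S ≤ U.2 ∧
      G 1 ≤ S ∧ S ≤ G (i + 3))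

/-!
Write `L = F₁ ⊆ A = F_{2n+1−i}` and `M = G₁ ⊆ B = G_{i+3}`. The planes `Σ, Σ'` of a solution
`(U₁, U₃)` force `U₁ ⊆ A ∩ B` and `L, M ⊆ U₃ ⊆ U₁^⊥`, so `U₁` lies in
`W = A ∩ B ∩ L^⊥ ∩ M^⊥`, and equals it because both are one-dimensional. As `L` is isotropic but
`ω` does not vanish on `L × M`, the form separates `L` from `W` and `M` from `W ⊕ L`; hence
`W ⊕ L ⊕ M` is three-dimensional. It is contained in `U₃`, so it is `U₃`.
-/

section GeneralField

open LinearMap (BilinForm)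
open LinearMap.BilinForm

theorem le_orthogonal_comm {R E : Type*} [CommSemiring R] [AddCommMonoid E] [Module R E]
    {ω : BilinForm R E} (hω : ω.IsRefl) {P Q : Submodule R E} :
    P ≤ orthogonal ω Q ↔ Q ≤ orthogonal ω P :=
  ⟨fun h ↦ (le_orthogonal_orthogonal hω).trans (orthogonal_le h),
    fun h ↦ (le_orthogonal_orthogonal hω).trans (orthogonal_le h)⟩

theorem le_orthogonal_self_of_isPrincipal {R E : Type*} [CommSemiring R] [AddCommMonoid E]
    [Module R E] {ω : BilinForm R E} (hω : ω.IsAlt) (P : Submodule R E) [P.IsPrincipal] :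
    P ≤ orthogonal ω P := by
  obtain ⟨v, rfl⟩ := Submodule.IsPrincipal.principal P
  intro x hx y hy
  obtain ⟨a, rfl⟩ := Submodule.mem_span_singleton.mp hx
  obtain ⟨b, rfl⟩ := Submodule.mem_span_singleton.mp hy
  simp [hω.self_eq_zero v]

theorem finrank_sup_eq_add_one_of_not_le {K V : Type*} [DivisionRing K] [AddCommGroup V]
    [Module K V] {P L : Submodule K V} [FiniteDimensional K P] (hL : finrank K L = 1)
    (hLP : ¬ L ≤ P) : finrank K ↥(P ⊔ L) = finrank K P + 1 := by
  have : FiniteDimensional K L := .of_finrank_eq_succ hL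
  have hdisj : P ⊓ L = ⊥ :=
    ((Submodule.isAtom_iff_finrank_eq_one.mpr hL).not_le_iff_disjoint.mp hLP).symm.eq_bot
  rw [← hL, ← Submodule.finrank_sup_add_finrank_inf_eq, hdisj, finrank_bot, add_zero]

theorem finrank_sup_eq_two_of_not_le {K V : Type*} [DivisionRing K] [AddCommGroup V]
    [Module K V] {P L : Submodule K V} (hP : finrank K P = 1) (hL : finrank K L = 1)
    (hLP : ¬ L ≤ P) : finrank K ↥(P ⊔ L) = 2 := by
  have : FiniteDimensional K P := .of_finrank_eq_succ hP
  rw [finrank_sup_eq_add_one_of_not_le hL hLP, hP]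

variable {K V : Type*} [Field K] [AddCommGroup V] [Module K V]

theorem le_orthogonal_self_of_finrank_eq_one {ω : BilinForm K V} (hω : ω.IsAlt)
    {L : Submodule K V} (hL : finrank K L = 1) : L ≤ orthogonal ω L := by
  have : FiniteDimensional K L := .of_finrank_eq_succ hL
  have : L.IsPrincipal := (Submodule.finrank_le_one_iff_isPrincipal L).mp hL.le
  exact le_orthogonal_self_of_isPrincipal hω L

/-- The pair `U = (U₁, U₃)` defines a line `D(U₁, U₃) = {Σ : U₁ ⊂ Σ ⊂ U₃}` of `ω`-isotropic
planes. -/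
def IsIsotropicLine (ω : BilinForm K V) (U : Submodule K V × Submodule K V) : Prop :=
  finrank K U.1 = 1 ∧ finrank K U.2 = 3 ∧ U.1 ≤ U.2 ∧ U.2 ≤ orthogonal ω U.1

/-- The line `D(U₁, U₃)` of `U = (U₁, U₃)` meets the variety of planes `{Σ : L ⊂ Σ ⊂ A}`. -/
def LineMeets (U : Submodule K V × Submodule K V) (L A : Submodule K V) : Prop :=
  ∃ S : Submodule K V, finrank K S = 2 ∧ U.1 ≤ S ∧ S ≤ U.2 ∧ L ≤ S ∧ S ≤ A

/-- The space `A ∩ B ∩ L^⊥ ∩ M^⊥`, which contains `U₁` for every isotropic line `D(U₁, U₃)`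
meeting both `{Σ : L ⊂ Σ ⊂ A}` and `{Σ : M ⊂ Σ ⊂ B}`. -/
def commonVertexSpace (ω : BilinForm K V) (L A M B : Submodule K V) : Submodule K V :=
  A ⊓ B ⊓ orthogonal ω L ⊓ orthogonal ω M

variable {ω : BilinForm K V} {U : Submodule K V × Submodule K V} {W L A M B : Submodule K V}

theorem le_commonVertexSpace :
    W ≤ commonVertexSpace ω L A M B ↔
      W ≤ A ∧ W ≤ B ∧ W ≤ orthogonal ω L ∧ W ≤ orthogonal ω M := by
  simp only [commonVertexSpace, le_inf_iff, and_assoc]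

theorem LineMeets.fst_le (h : LineMeets U L A) : U.1 ≤ A := by
  obtain ⟨S, -, hUS, -, -, hSA⟩ := h
  exact hUS.trans hSA

theorem LineMeets.le_snd (h : LineMeets U L A) : L ≤ U.2 := by
  obtain ⟨S, -, -, hSU, hLS, -⟩ := h
  exact hLS.trans hSU

theorem lineMeets_of_sup_le {T : Submodule K V} (hdim : finrank K ↥(W ⊔ L) = 2)
    (hT : W ⊔ L ≤ T) (hA : W ⊔ L ≤ A) : LineMeets (W, T) L A :=
  ⟨W ⊔ L, hdim, le_sup_left, hT, le_sup_right, hA⟩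

theorem IsIsotropicLine.fst_le_commonVertexSpace (hω : ω.IsRefl) (hU : IsIsotropicLine ω U)
    (hA : LineMeets U L A) (hB : LineMeets U M B) : U.1 ≤ commonVertexSpace ω L A M B := by
  obtain ⟨-, -, -, hperp⟩ := hU
  exact le_commonVertexSpace.mpr ⟨hA.fst_le, hB.fst_le,
    (le_orthogonal_comm hω).mp (hA.le_snd.trans hperp),
    (le_orthogonal_comm hω).mp (hB.le_snd.trans hperp)⟩

theorem finrank_sup_sup_eq_three (hω : ω.IsAlt) (hW : finrank K W = 1) (hL : finrank K L = 1)
    (hM : finrank K M = 1) (hWL : W ≤ orthogonal ω L) (hWM : W ≤ orthogonal ω M)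
    (hLM : ¬ L ≤ orthogonal ω M) : finrank K ↥(W ⊔ L ⊔ M) = 3 := by
  have hdim : finrank K ↥(W ⊔ L) = 2 :=
    finrank_sup_eq_two_of_not_le hW hL fun hLW ↦ hLM (hLW.trans hWM)
  have : FiniteDimensional K ↥(W ⊔ L) := .of_finrank_eq_succ hdim
  have hsup : W ⊔ L ≤ orthogonal ω L := sup_le hWL (le_orthogonal_self_of_finrank_eq_one hω hL)
  have hM_not_le : ¬ M ≤ W ⊔ L :=
    fun h ↦ hLM ((le_orthogonal_comm hω.isRefl).mp (h.trans hsup))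
  rw [finrank_sup_eq_add_one_of_not_le hM hM_not_le, hdim]

theorem isIsotropicLine_sup_sup (hω : ω.IsAlt) (hW : finrank K W = 1)
    (hdim : finrank K ↥(W ⊔ L ⊔ M) = 3) (hWL : W ≤ orthogonal ω L)
    (hWM : W ≤ orthogonal ω M) : IsIsotropicLine ω (W, W ⊔ L ⊔ M) :=
  ⟨hW, hdim, le_sup_left.trans le_sup_left,
    sup_le (sup_le (le_orthogonal_self_of_finrank_eq_one hω hW)
      ((le_orthogonal_comm hω.isRefl).mp hWL)) ((le_orthogonal_comm hω.isRefl).mp hWM)⟩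

theorem IsIsotropicLine.eq_of_lineMeets (hω : ω.IsRefl)
    (hW : finrank K (commonVertexSpace ω L A M B) = 1)
    (hdim : finrank K ↥(commonVertexSpace ω L A M B ⊔ L ⊔ M) = 3)
    (hU : IsIsotropicLine ω U) (hA : LineMeets U L A) (hB : LineMeets U M B) :
    U = (commonVertexSpace ω L A M B, commonVertexSpace ω L A M B ⊔ L ⊔ M) := by
  have hle := hU.fst_le_commonVertexSpace hω hA hB
  obtain ⟨hU₁, hU₃, hU₁₃, -⟩ := hU
  have : FiniteDimensional K (commonVertexSpace ω L A M B) := .of_finrank_eq_succ hW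
  have : FiniteDimensional K U.2 := .of_finrank_eq_succ hU₃
  have hfst : U.1 = commonVertexSpace ω L A M B :=
    Submodule.eq_of_le_of_finrank_le hle (hW.trans hU₁.symm).le
  have hsup : commonVertexSpace ω L A M B ⊔ L ⊔ M ≤ U.2 :=
    sup_le (sup_le (hfst ▸ hU₁₃) hA.le_snd) hB.le_snd
  exact Prod.ext hfst (Submodule.eq_of_le_of_finrank_le hsup (hU₃.trans hdim.symm).le).symm

theorem stmt_19_general (hω : ω.IsAlt) (hL : finrank K L = 1) (hM : finrank K M = 1)
    (hLA : L ≤ A) (hMB : M ≤ B) (hW : finrank K (commonVertexSpace ω L A M B) = 1)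
    (hLM : ¬ L ≤ orthogonal ω M) :
    (∃! U, IsIsotropicLine ω U ∧ LineMeets U L A ∧ LineMeets U M B) ∧
      let U := (commonVertexSpace ω L A M B, commonVertexSpace ω L A M B ⊔ L ⊔ M)
      IsIsotropicLine ω U ∧ LineMeets U L A ∧ LineMeets U M B := by
  obtain ⟨hWA, hWB, hWL, hWM⟩ := le_commonVertexSpace.mp (le_refl (commonVertexSpace ω L A M B))
  have hML : ¬ M ≤ orthogonal ω L := mt (le_orthogonal_comm hω.isRefl).mp hLM
  have hdim := finrank_sup_sup_eq_three hω hW hL hM hWL hWM hLM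
  have hline := isIsotropicLine_sup_sup hω hW hdim hWL hWM
  have hdimL := finrank_sup_eq_two_of_not_le hW hL fun hLW ↦ hLM (hLW.trans hWM)
  have hdimM := finrank_sup_eq_two_of_not_le hW hM fun hMW ↦ hML (hMW.trans hWL)
  have hmeetsA := lineMeets_of_sup_le hdimL (le_sup_left (b := M)) (sup_le hWA hLA)
  have hmeetsB := lineMeets_of_sup_le hdimM (sup_le_sup_right (le_sup_left (b := L)) M)
    (sup_le hWB hMB)
  exact ⟨⟨_, ⟨hline, hmeetsA, hmeetsB⟩, fun U ⟨hU, hA, hB⟩ ↦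
    hU.eq_of_lineMeets hω.isRefl hW hdim hA hB⟩, hline, hmeetsA, hmeetsB⟩

end GeneralField

theorem linePred_iff {n i : ℕ} {V : Type*} [AddCommGroup V] [Module ℂ V]
    {ω : V →ₗ[ℂ] V →ₗ[ℂ] ℂ} {F G : ℕ → Submodule ℂ V} {U : Submodule ℂ V × Submodule ℂ V} :
    linePred n i ω F G U ↔ IsIsotropicLine ω U ∧ LineMeets U (F 1) (F (2 * n + 1 - i)) ∧
      LineMeets U (G 1) (G (i + 3)) := by
  simp only [linePred, IsIsotropicLine, LineMeets, and_assoc]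

/-- Let `n ≥ 2`, `V` a `(2n+1)`-dimensional `ℂ`-vector space, `ω` an alternating bilinear
form on `V` of rank `2n`, `F_•`, `G_•` complete flags of `V` and `0 ≤ i ≤ 2n−2`. Under the
genericity conditions (i)–(iv), there is exactly one pair `(U₁, U₃)` with `dim U₁ = 1`,
`dim U₃ = 3`, `U₁ ⊆ U₃ ⊆ U₁^⊥` such that the corresponding line on `IG(2,2n+1)` meets
`{Σ : F₁ ⊂ Σ ⊂ F_{2n+1−i}}` and `{Σ : G₁ ⊂ Σ ⊂ G_{i+3}}`; moreover it is given by
`U₁ = F_{2n+1−i} ∩ G_{i+3} ∩ F₁^⊥ ∩ G₁^⊥` and `U₃ = U₁ ⊕ F₁ ⊕ G₁`. -/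
theorem stmt_19 (n i : ℕ) (hn : 2 ≤ n) (hi : i ≤ 2 * n - 2)
    (V : Type*) [AddCommGroup V] [Module ℂ V] [FiniteDimensional ℂ V]
    (hV : finrank ℂ V = 2 * n + 1)
    (ω : V →ₗ[ℂ] V →ₗ[ℂ] ℂ) (halt : ∀ v : V, ω v v = 0)
    (hrank : finrank ℂ (LinearMap.range ω) = 2 * n)
    (F G : ℕ → Submodule ℂ V)
    (hFmono : Monotone F) (hGmono : Monotone G)
    (hFdim : ∀ p ≤ 2 * n + 1, finrank ℂ (F p) = p)
    (hGdim : ∀ q ≤ 2 * n + 1, finrank ℂ (G q) = q)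
    (hFtop : F (2 * n + 1) = ⊤) (hGtop : G (2 * n + 1) = ⊤)
    (h1 : ∀ p ≤ 2 * n + 1, ∀ q ≤ 2 * n + 1,
      finrank ℂ ↥(F p ⊓ G q) = p + q - (2 * n + 1))
    (h2 : finrank ℂ ↥(F (2 * n + 1 - i) ⊓ G (i + 3)
      ⊓ LinearMap.BilinForm.orthogonal ω (F 1)
      ⊓ LinearMap.BilinForm.orthogonal ω (G 1)) = 1)
    (h3 : ¬ F 1 ≤ LinearMap.BilinForm.orthogonal ω (G 1))
    (h4 : ¬ G 1 ≤ LinearMap.BilinForm.orthogonal ω (F 1)) :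
    (∃! U : Submodule ℂ V × Submodule ℂ V, linePred n i ω F G U) ∧
    linePred n i ω F G
      (F (2 * n + 1 - i) ⊓ G (i + 3)
        ⊓ LinearMap.BilinForm.orthogonal ω (F 1)
        ⊓ LinearMap.BilinForm.orthogonal ω (G 1),
       (F (2 * n + 1 - i) ⊓ G (i + 3)
        ⊓ LinearMap.BilinForm.orthogonal ω (F 1)
        ⊓ LinearMap.BilinForm.orthogonal ω (G 1)) ⊔ F 1 ⊔ G 1) := by
  simp only [linePred_iff]
  exact stmt_19_general halt (hFdim 1 (by omega)) (hGdim 1 (by omega))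
    (hFmono (by omega)) (hGmono (by omega)) h2 h3
end
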